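/- arXiv:2408.03037 — 3 statements merged into one kernel-verified Lean document; each statement's English description precedes it below -/
import Mathlib

section
/- Achievability direction of Theorem 1 (symbol-by-symbol scheme): For every joint probability distribution of (X_0, T, U_1, X_1, Y_1, U_2), with T taking values in a finite set, which decomposes as P_{X_0} P_T P_{U_1|X_0,T} P_{X_1,Y_1|X_0,U_1} P_{U_2|T,Y_1}, and such that E[U_1²] and E[(X_1 − U_2)²] are finite, the pair of costs (E[U_1²], E[(X_1 − U_2)²]) belongs to the achievable region R_ed for causal encoding and causal decoding. -/
/-!
Formalization of results from "Causal Vector-valued Witsenhausen Counterexamples with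
Feedback" (Zhao, Le Treust, Oechtering).

Stochastic encoders/decoders (stochastic kernels) are realized as measurable functions of
independent i.i.d. randomization seeds, which is equivalent to the kernel formulation on
standard Borel spaces.
-/

open MeasureTheory ProbabilityTheory
open scoped ENNReal NNReal

namespace Witsenhausen

noncomputable section

/-- A path (block of length `n`) of real values. -/
abbrev Path (n : ℕ) : Type := Fin n → ℝ

/-- i.i.d. centered Gaussian vector of length `n` and variance `v`. -/
def iidGaussian (n : ℕ) (v : ℝ≥0) : Measure (Path n) :=
  Measure.pi fun _ => gaussianReal 0 v

instance (n : ℕ) (v : ℝ≥0) : IsProbabilityMeasure (iidGaussian n v) := by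
  unfold iidGaussian; infer_instance

/-- Canonical sample space: source `X₀ⁿ`, channel noise `Z₁ⁿ`, and the randomization seeds of
the (stochastic) encoder and decoder. -/
abbrev Sample (n : ℕ) : Type := Path n × Path n × Path n × Path n

/-- The base randomness: the i.i.d. `N(0,Q)` source `X₀ⁿ`, the independent i.i.d. `N(0,N)`
channel noise `Z₁ⁿ`, and independent i.i.d. randomization seeds for the stochastic encoder
and decoder. -/
def base (n : ℕ) (Q N : ℝ≥0) : Measure (Sample n) :=
  (iidGaussian n Q).prod ((iidGaussian n N).prod
    ((iidGaussian n 1).prod (iidGaussian n 1)))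

instance (n : ℕ) (Q N : ℝ≥0) : IsProbabilityMeasure (base n Q N) := by
  unfold base; infer_instance

/-- The source sequence `X₀ⁿ`. -/
def srcX0 {n : ℕ} (ω : Sample n) : Path n := ω.1
/-- The channel noise sequence `Z₁ⁿ`. -/
def noiseZ {n : ℕ} (ω : Sample n) : Path n := ω.2.1
/-- The encoder randomization seeds. -/
def seedV {n : ℕ} (ω : Sample n) : Path n := ω.2.2.1
/-- The decoder randomization seeds. -/
def seedW {n : ℕ} (ω : Sample n) : Path n := ω.2.2.2

/-- The long-run input cost `c_P(u₁ⁿ) = (1/n) ∑_t u_{1,t}²`. -/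
def costP {n : ℕ} (u : Path n) : ℝ := (1 / (n : ℝ)) * ∑ t, (u t) ^ 2

/-- The long-run estimation cost `c_S(x₁ⁿ, u₂ⁿ) = (1/n) ∑_t (x_{1,t} - u_{2,t})²`. -/
def costS {n : ℕ} (x u : Path n) : ℝ := (1 / (n : ℝ)) * ∑ t, (x t - u t) ^ 2

/-- A control design with causal encoder and causal decoder: at each time `t` the stochastic
encoder `f^t` observes `X₀^t` and the stochastic decoder `g^t` observes `Y₁^t` (stochastic
maps are realized as measurable functions of independent randomization seeds). -/
structure Design (n : ℕ) where
  enc : Fin n → Path n → ℝ → ℝ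
  dec : Fin n → Path n → ℝ → ℝ
  enc_meas : ∀ t, Measurable fun p : Path n × ℝ => enc t p.1 p.2
  dec_meas : ∀ t, Measurable fun p : Path n × ℝ => dec t p.1 p.2
  /-- causal encoding: `U_{1,t}` depends on the source only through `X₀^t`. -/
  enc_causal : ∀ (t : Fin n) (x x' : Path n) (v : ℝ),
    (∀ s, s ≤ t → x s = x' s) → enc t x v = enc t x' v
  /-- causal decoding: `U_{2,t}` depends on the channel output only through `Y₁^t`. -/
  dec_causal : ∀ (t : Fin n) (y y' : Path n) (w : ℝ),
    (∀ s, s ≤ t → y s = y' s) → dec t y w = dec t y' w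

namespace Design

variable {n : ℕ} (c : Design n)

/-- The control sequence `U₁ⁿ`. -/
def U1 (ω : Sample n) : Path n := fun t => c.enc t (srcX0 ω) (seedV ω t)
/-- The interim state `X₁ⁿ = X₀ⁿ + U₁ⁿ`. -/
def X1 (ω : Sample n) : Path n := fun t => srcX0 ω t + c.U1 ω t
/-- The channel output `Y₁ⁿ = X₁ⁿ + Z₁ⁿ`. -/
def Y1 (ω : Sample n) : Path n := fun t => c.X1 ω t + noiseZ ω t
/-- The estimate sequence `U₂ⁿ`. -/
def U2 (ω : Sample n) : Path n := fun t => c.dec t (c.Y1 ω) (seedW ω t)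

end Design

/-- `(P, S)` is an achievable pair of costs for causal encoding and causal decoding: for every
`ε > 0` there is `n₀` such that for every blocklength `n ≥ n₀` some control design makes the
expected cost deviation `E[|P - c_P(U₁ⁿ)| + |S - c_S(X₁ⁿ, U₂ⁿ)|]` at most `ε`.
This defines the region `R_ed`. -/
def achievable (Q N : ℝ≥0) (P S : ℝ) : Prop :=
  ∀ ε > (0 : ℝ), ∃ n₀ : ℕ, ∀ n ≥ n₀, ∃ c : Design n,
    (∫⁻ ω, ENNReal.ofReal
        (|P - costP (c.U1 ω)| + |S - costS (c.X1 ω) (c.U2 ω)|) ∂(base n Q N))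
      ≤ ENNReal.ofReal ε

/-- A single-letter joint distribution of `(X₀, T, U₁, X₁, Y₁, U₂)` decomposing according to
`P_{X₀} P_T P_{U₁|X₀,T} P_{X₁,Y₁|X₀,U₁} P_{U₂|T,Y₁}`: it is described by the distribution of
the time-sharing variable `T` (independent of `X₀ ~ N(0,Q)`), the conditional kernel
`P_{U₁|X₀,T}`, and the conditional kernel `P_{U₂|T,Y₁}`; the Witsenhausen channel
`P_{X₁,Y₁|X₀,U₁}` is fixed. -/
structure SLDecomp (Q N : ℝ≥0) (T : Type) [MeasurableSpace T] where
  /-- the distribution `P_T` of the time-sharing variable -/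
  μT : Measure T
  probT : IsProbabilityMeasure μT
  /-- the conditional distribution `P_{U₁|X₀,T}` -/
  κ1 : Kernel (ℝ × T) ℝ
  markov1 : IsMarkovKernel κ1
  /-- the conditional distribution `P_{U₂|T,Y₁}` -/
  κ2 : Kernel (T × ℝ) ℝ
  markov2 : IsMarkovKernel κ2

attribute [instance] SLDecomp.probT SLDecomp.markov1 SLDecomp.markov2

namespace SLDecomp

/-- canonical coordinates `((((X₀, T), U₁), Z₁), U₂)` -/
abbrev Space (T : Type) : Type := (((ℝ × T) × ℝ) × ℝ) × ℝ

variable {Q N : ℝ≥0} {T : Type} [MeasurableSpace T]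

def sX0 (q : Space T) : ℝ := q.1.1.1.1
def sT (q : Space T) : T := q.1.1.1.2
def sU1 (q : Space T) : ℝ := q.1.1.2
def sZ (q : Space T) : ℝ := q.1.2
def sU2 (q : Space T) : ℝ := q.2
def sX1 (q : Space T) : ℝ := sX0 q + sU1 q
def sY1 (q : Space T) : ℝ := sX1 q + sZ q

/-- The joint law `P_{X₀} P_T P_{U₁|X₀,T} P_{X₁,Y₁|X₀,U₁} P_{U₂|T,Y₁}` on the canonical
space: `(X₀, T) ~ N(0,Q) ⊗ P_T`, then `U₁ ~ P_{U₁|X₀,T}`, then the memoryless Witsenhausen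
channel is realized by an independent noise `Z₁ ~ N(0,N)` through `X₁ = X₀ + U₁` and
`Y₁ = X₁ + Z₁`, and finally `U₂ ~ P_{U₂|T,Y₁}`. -/
def measure (d : SLDecomp Q N T) : Measure (Space T) :=
  ((((gaussianReal 0 Q).prod d.μT) ⊗ₘ d.κ1).prod (gaussianReal 0 N)) ⊗ₘ
    (d.κ2.comap (fun q : ((ℝ × T) × ℝ) × ℝ => (q.1.1.2, q.1.1.1 + q.1.2 + q.2))
      (by fun_prop))

instance (d : SLDecomp Q N T) : IsProbabilityMeasure d.measure := by
  unfold measure; infer_instance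

/-- The induced single-letter joint law of `(X₀, T, U₁, X₁, Y₁, U₂)`. -/
def joint (d : SLDecomp Q N T) : Measure (ℝ × T × ℝ × ℝ × ℝ × ℝ) :=
  d.measure.map (fun q => (sX0 q, sT q, sU1 q, sX1 q, sY1 q, sU2 q))

/-- The pair `(P, S)` consists of the expected single-letter Witsenhausen costs of the
decomposed distribution: `P = E[U₁²]` and `S = E[(X₁ - U₂)²]` (both finite). -/
def realizes (d : SLDecomp Q N T) (P S : ℝ) : Prop :=
  Integrable (fun q => (sU1 q) ^ 2) d.measure ∧
  Integrable (fun q => (sX1 q - sU2 q) ^ 2) d.measure ∧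
  P = ∫ q, (sU1 q) ^ 2 ∂d.measure ∧
  S = ∫ q, (sX1 q - sU2 q) ^ 2 ∂d.measure

end SLDecomp

open Filter Topology

lemma strictMono_cdf_of_volume_absolutelyContinuous (μ : Measure ℝ) [IsProbabilityMeasure μ]
    (h : volume ≪ μ) : StrictMono (cdf μ) := by
  intro x y hxy
  have hpos : μ (Set.Ioc x y) ≠ 0 := fun h0 => by
    have := h h0
    simp [hxy.not_ge] at this
  rw [← measure_cdf μ, StieltjesFunction.measure_Ioc] at hpos
  by_contra hle
  exact hpos (ENNReal.ofReal_of_nonpos (by linarith))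

lemma continuous_cdf_of_nullSingletonClass (μ : Measure ℝ) [IsProbabilityMeasure μ]
    [NullSingletonClass μ] : Continuous (cdf μ) := by
  refine continuous_iff_continuousAt.2 fun x => ?_
  rw [(monotone_cdf μ).continuousAt_iff_leftLim_eq_rightLim, StieltjesFunction.rightLim_eq]
  have h0 : μ {x} = 0 := measure_singleton x
  rw [← measure_cdf μ, StieltjesFunction.measure_singleton, ENNReal.ofReal_eq_zero] at h0
  exact le_antisymm ((monotone_cdf μ).leftLim_le le_rfl) (by linarith)

lemma map_cdf_eq_volume (μ : Measure ℝ) [IsProbabilityMeasure μ] [NullSingletonClass μ]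
    (h : volume ≪ μ) :
    μ.map (fun x => (⟨cdf μ x, cdf_nonneg μ x, cdf_le_one μ x⟩ : unitInterval)) = volume := by
  have hc := continuous_cdf_of_nullSingletonClass μ
  have hm := strictMono_cdf_of_volume_absolutelyContinuous μ h
  have hmeas : Measurable
      (fun x => (⟨cdf μ x, cdf_nonneg μ x, cdf_le_one μ x⟩ : unitInterval)) :=
    hc.measurable.subtype_mk
  have : IsProbabilityMeasure (μ.map
      (fun x => (⟨cdf μ x, cdf_nonneg μ x, cdf_le_one μ x⟩ : unitInterval))) :=
    Measure.isProbabilityMeasure_map hmeas.aemeasurable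
  refine Measure.ext_of_Iic _ _ fun u => ?_
  rw [Measure.map_apply hmeas measurableSet_Iic, unitInterval.volume_Iic]
  have hpos : ∀ x, 0 < cdf μ x := fun x =>
    (cdf_nonneg μ (x - 1)).trans_lt (hm (by linarith))
  have hlt : ∀ x, cdf μ x < 1 := fun x =>
    (hm (by linarith : x < x + 1)).trans_le (cdf_le_one μ _)
  obtain ⟨u, hu0, hu1⟩ := u
  have hset : (fun x => (⟨cdf μ x, cdf_nonneg μ x, cdf_le_one μ x⟩ : unitInterval)) ⁻¹'
      Set.Iic ⟨u, hu0, hu1⟩ = {x | cdf μ x ≤ u} := rfl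
  rw [hset]
  rcases hu0.eq_or_lt with rfl | hu0
  · simp [fun x => (hpos x).not_ge]
  rcases hu1.eq_or_lt with rfl | hu1
  · simp [cdf_le_one]
  obtain ⟨x, rfl⟩ : u ∈ Set.range (cdf μ) :=
    mem_range_of_exists_le_of_exists_ge hc
      ((tendsto_cdf_atBot μ).eventually_le_const hu0).exists
      ((tendsto_cdf_atTop μ).eventually_const_le hu1).exists
  simp_rw [hm.le_iff_le]
  exact (ofReal_cdf μ x).symm

lemma exists_measurable_map_gaussianReal_eq {X : Type*} [MeasurableSpace X] {v : ℝ≥0}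
    (hv : v ≠ 0) (κ : Kernel X ℝ) [IsMarkovKernel κ] :
    ∃ f : X → ℝ → ℝ, Measurable (Function.uncurry f) ∧
      ∀ a, (gaussianReal 0 v).map (f a) = κ a := by
  obtain ⟨f, hf, hκ⟩ := κ.exists_measurable_map_eq_unitInterval
  have := nullSingletonClass_gaussianReal (μ := 0) hv
  have hF : Measurable (fun x => (⟨cdf (gaussianReal 0 v) x, cdf_nonneg _ x, cdf_le_one _ x⟩ :
      unitInterval)) :=
    (continuous_cdf_of_nullSingletonClass _).measurable.subtype_mk
  refine ⟨fun a x => f a ⟨cdf (gaussianReal 0 v) x, cdf_nonneg _ x, cdf_le_one _ x⟩,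
    hf.comp (measurable_fst.prodMk (hF.comp measurable_snd)), fun a => ?_⟩
  rw [← hκ a, ← map_cdf_eq_volume _ (gaussianReal_absolutelyContinuous' 0 hv),
    Measure.map_map (by fun_prop) hF]
  rfl

lemma measurePreserving_zip {ι α β : Type*} [Fintype ι] [MeasurableSpace α] [MeasurableSpace β]
    (μ : Measure α) (ν : Measure β) [IsProbabilityMeasure μ] [IsProbabilityMeasure ν] :
    MeasurePreserving (fun (p : (ι → α) × (ι → β)) i => (p.1 i, p.2 i))
      ((Measure.pi fun _ => μ).prod (Measure.pi fun _ => ν))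
      (Measure.pi fun _ => μ.prod ν) :=
  (measurePreserving_arrowProdEquivProdArrow α β ι (fun _ => μ) (fun _ => ν)).symm

lemma measurable_abs_sub_average {E : Type*} [MeasurableSpace E] (n : ℕ) (m : ℝ) {a : E → ℝ}
    (ha : Measurable a) :
    Measurable fun e : Fin n → E => ENNReal.ofReal |m - (1 / (n : ℝ)) * ∑ i, a (e i)| := by
  fun_prop

lemma tendsto_lintegral_abs_integral_sub_average {E : Type*} [MeasurableSpace E] (ν : Measure E)
    [IsProbabilityMeasure ν] {a : E → ℝ} (ha : Measurable a) (hint : Integrable a ν) :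
    Tendsto (fun n : ℕ => ∫⁻ e, ENNReal.ofReal |(∫ q, a q ∂ν) - (1 / (n : ℝ)) * ∑ i, a (e i)|
      ∂(Measure.pi fun _ : Fin n => ν)) atTop (𝓝 0) := by
  set ρ : Measure (ℕ → E) := Measure.infinitePi fun _ => ν
  have heval : ∀ i : ℕ, MeasurePreserving (fun x : ℕ → E => x i) ρ ν :=
    measurePreserving_eval_infinitePi fun _ => ν
  have hindep : iIndepFun (fun (i : ℕ) (x : ℕ → E) => a (x i)) ρ :=
    iIndepFun_infinitePi (X := fun _ => a) fun _ => ha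
  have hmean : ∫ x, a (x 0) ∂ρ = ∫ q, a q ∂ν := by
    rw [← (heval 0).map_eq,
      integral_map (heval 0).measurable.aemeasurable ha.aestronglyMeasurable]
  have hlaw := strong_law_Lp (μ := ρ) le_rfl ENNReal.one_ne_top (fun (i : ℕ) x => a (x i))
    (memLp_one_iff_integrable.2 ((heval 0).integrable_comp_of_integrable hint))
    (fun i j hij => hindep.indepFun hij)
    (fun i => ⟨(ha.comp (heval i).measurable).aemeasurable,
      (ha.comp (heval 0).measurable).aemeasurable, by
      change Measure.map (a ∘ fun x : ℕ → E => x i) ρ = Measure.map (a ∘ fun x : ℕ → E => x 0) ρ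
      rw [← Measure.map_map ha (heval i).measurable, ← Measure.map_map ha (heval 0).measurable,
        (heval i).map_eq, (heval 0).map_eq]⟩)
  refine hlaw.congr fun n => ?_
  have hproj : ρ.map (fun x (i : Fin n) => x i) = Measure.pi fun _ : Fin n => ν := by
    have hcoord : iIndepFun (fun (i : ℕ) (x : ℕ → E) => x i) ρ :=
      iIndepFun_infinitePi (X := fun _ e => e) fun _ => measurable_id
    rw [(iIndepFun_iff_map_fun_eq_pi_map fun i : Fin n => (heval i).measurable.aemeasurable).1
      (hcoord.precomp Fin.val_injective)]
    simp_rw [(heval _).map_eq]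
  rw [← hproj, lintegral_map (measurable_abs_sub_average n _ ha) (by fun_prop),
    eLpNorm_one_eq_lintegral_enorm]
  refine lintegral_congr fun x => ?_
  rw [hmean, Real.enorm_eq_ofReal_abs, abs_sub_comm, Finset.sum_range, smul_eq_mul, one_div]

/-- The single-letter base randomness `(T, X₀, Z₁, V, W)`. -/
def letterBase {T : Type} [MeasurableSpace T] (Q N : ℝ≥0) (μT : Measure T) :
    Measure (T × ℝ × ℝ × ℝ × ℝ) :=
  μT.prod ((gaussianReal 0 Q).prod ((gaussianReal 0 N).prod
    ((gaussianReal 0 1).prod (gaussianReal 0 1))))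

instance {T : Type} [MeasurableSpace T] (Q N : ℝ≥0) (μT : Measure T) [IsProbabilityMeasure μT] :
    IsProbabilityMeasure (letterBase Q N μT) := by
  unfold letterBase; infer_instance

/-- The single-letter scheme: the canonical coordinates `((((X₀, T), U₁), Z₁), U₂)` as a function
of the single-letter base randomness, for an encoder `f` and a decoder `g`. -/
def letterMap {T : Type} (f : ℝ × T → ℝ → ℝ) (g : T × ℝ → ℝ → ℝ) (e : T × ℝ × ℝ × ℝ × ℝ) :
    SLDecomp.Space T :=
  ((((e.2.1, e.1), f (e.2.1, e.1) e.2.2.2.1), e.2.2.1),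
    g (e.1, e.2.1 + f (e.2.1, e.1) e.2.2.2.1 + e.2.2.1) e.2.2.2.2)

lemma measurable_letterMap {T : Type} [MeasurableSpace T] {f : ℝ × T → ℝ → ℝ}
    {g : T × ℝ → ℝ → ℝ} (hf : Measurable (Function.uncurry f))
    (hg : Measurable (Function.uncurry g)) : Measurable (letterMap f g) := by
  have hU : Measurable fun e : T × ℝ × ℝ × ℝ × ℝ => f (e.2.1, e.1) e.2.2.2.1 :=
    hf.comp (g := Function.uncurry f)
      (f := fun e : T × ℝ × ℝ × ℝ × ℝ => ((e.2.1, e.1), e.2.2.2.1)) (by fun_prop)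
  have hU2 : Measurable fun e : T × ℝ × ℝ × ℝ × ℝ =>
      g (e.1, e.2.1 + f (e.2.1, e.1) e.2.2.2.1 + e.2.2.1) e.2.2.2.2 :=
    hg.comp (g := Function.uncurry g)
      (f := fun e : T × ℝ × ℝ × ℝ × ℝ =>
        ((e.1, e.2.1 + f (e.2.1, e.1) e.2.2.2.1 + e.2.2.1), e.2.2.2.2)) (by fun_prop)
  unfold letterMap
  fun_prop

lemma map_letterMap {Q N : ℝ≥0} {T : Type} [MeasurableSpace T] (d : SLDecomp Q N T)
    {f : ℝ × T → ℝ → ℝ} {g : T × ℝ → ℝ → ℝ}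
    (hf : Measurable (Function.uncurry f)) (hg : Measurable (Function.uncurry g))
    (hf1 : ∀ a, (gaussianReal 0 1).map (f a) = d.κ1 a)
    (hg2 : ∀ a, (gaussianReal 0 1).map (g a) = d.κ2 a) :
    (letterBase Q N d.μT).map (letterMap f g) = d.measure := by
  have hL := measurable_letterMap hf hg
  refine Measure.ext_of_lintegral _ fun φ hφ => ?_
  have hφL : Measurable fun e => φ (letterMap f g e) := hφ.comp hL
  rw [lintegral_map hφ hL, letterBase, lintegral_prod _ (by fun_prop)]
  have hfa : ∀ a, Measurable (f a) := fun a => hf.of_uncurry_left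
  have hga : ∀ a, Measurable (g a) := fun a => hg.of_uncurry_left
  simp_rw [SLDecomp.measure]
  rw [Measure.lintegral_compProd hφ]
  have hK : Measurable fun q : ((ℝ × T) × ℝ) × ℝ => ∫⁻ b, φ (q, b)
      ∂((d.κ2.comap (fun q : ((ℝ × T) × ℝ) × ℝ => (q.1.1.2, q.1.1.1 + q.1.2 + q.2))
      (by fun_prop)) q) := hφ.lintegral_kernel_prod_right'
  rw [lintegral_prod _ hK.aemeasurable, Measure.lintegral_compProd hK.lintegral_prod_right',
    lintegral_prod_symm _ (by
      exact (hK.lintegral_prod_right'.lintegral_kernel_prod_right' (κ := d.κ1)).aemeasurable)]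
  refine lintegral_congr fun t => ?_
  rw [lintegral_prod _ (by fun_prop)]
  refine lintegral_congr fun x => ?_
  rw [lintegral_prod _ (by fun_prop)]
  have hsub : Measurable fun p : ℝ × ℝ => ∫⁻ w, φ (letterMap f g (t, x, p.1, p.2, w))
      ∂(gaussianReal 0 1) := by
    refine Measurable.lintegral_prod_right'
      (f := fun p : (ℝ × ℝ) × ℝ => φ (letterMap f g (t, x, p.1.1, p.1.2, p.2))) (by fun_prop)
  calc _ = ∫⁻ z, ∫⁻ v, ∫⁻ w, φ (letterMap f g (t, x, z, v, w)) ∂(gaussianReal 0 1)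
        ∂(gaussianReal 0 1) ∂(gaussianReal 0 N) :=
        lintegral_congr fun z => lintegral_prod _ (by fun_prop)
    _ = ∫⁻ v, ∫⁻ z, ∫⁻ w, φ (letterMap f g (t, x, z, v, w)) ∂(gaussianReal 0 1)
        ∂(gaussianReal 0 N) ∂(gaussianReal 0 1) := lintegral_lintegral_swap hsub.aemeasurable
    _ = _ := by
      have hKu := hK.lintegral_prod_right' (ν := gaussianReal 0 N)
      rw [← hf1, lintegral_map (by exact hKu.comp measurable_prodMk_left) (hfa _)]
      refine lintegral_congr fun v => lintegral_congr fun z => ?_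
      rw [Kernel.comap_apply, ← hg2, lintegral_map (by fun_prop) (hga _)]
      rfl

lemma measurePreserving_zip_base {T : Type} [MeasurableSpace T] (n : ℕ) (Q N : ℝ≥0)
    (μT : Measure T) [IsProbabilityMeasure μT] :
    MeasurePreserving
      (fun (p : (Fin n → T) × Sample n) i =>
        (p.1 i, srcX0 p.2 i, noiseZ p.2 i, seedV p.2 i, seedW p.2 i))
      ((Measure.pi fun _ => μT).prod (base n Q N)) (Measure.pi fun _ => letterBase Q N μT) := by
  have hVW := measurePreserving_zip (ι := Fin n) (gaussianReal 0 1) (gaussianReal 0 1)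
  have hZ := (measurePreserving_zip (ι := Fin n) (gaussianReal 0 N) _).comp
    ((MeasurePreserving.id (iidGaussian n N)).prod hVW)
  have hX := (measurePreserving_zip (ι := Fin n) (gaussianReal 0 Q) _).comp
    ((MeasurePreserving.id (iidGaussian n Q)).prod hZ)
  exact (measurePreserving_zip (ι := Fin n) μT _).comp ((MeasurePreserving.id _).prod hX)

/-- The symbol-by-symbol design for a deterministic time-sharing sequence `τ`. -/
def symbolwiseDesign {T : Type} [MeasurableSpace T] {n : ℕ} {f : ℝ × T → ℝ → ℝ}
    {g : T × ℝ → ℝ → ℝ} (hf : Measurable (Function.uncurry f))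
    (hg : Measurable (Function.uncurry g)) (τ : Fin n → T) : Design n where
  enc t x v := f (x t, τ t) v
  dec t y w := g (τ t, y t) w
  enc_meas t := hf.comp (g := Function.uncurry f)
    (f := fun p : Path n × ℝ => ((p.1 t, τ t), p.2)) (by fun_prop)
  dec_meas t := hg.comp (g := Function.uncurry g)
    (f := fun p : Path n × ℝ => ((τ t, p.1 t), p.2)) (by fun_prop)
  enc_causal t x x' v h := by rw [h t le_rfl]
  dec_causal t y y' w h := by rw [h t le_rfl]

/-- **Achievability direction of Theorem 1** (symbol-by-symbol scheme): for every joint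
distribution of `(X₀, T, U₁, X₁, Y₁, U₂)` with finite time-sharing variable `T`, decomposing
according to `P_{X₀} P_T P_{U₁|X₀,T} P_{X₁,Y₁|X₀,U₁} P_{U₂|T,Y₁}` and with finite expected
costs `E[U₁²]` and `E[(X₁ - U₂)²]`, the pair of costs `(E[U₁²], E[(X₁ - U₂)²])` belongs to
the achievable region `R_ed` for causal encoding and causal decoding. -/
theorem achievable_of_decomposition (Q N : ℝ≥0) (hQ : 0 < Q) (hN : 0 < N)
    (T : Type) [MeasurableSpace T] [Fintype T] (d : SLDecomp Q N T)
    (hP : Integrable (fun q => (SLDecomp.sU1 q) ^ 2) d.measure)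
    (hS : Integrable (fun q => (SLDecomp.sX1 q - SLDecomp.sU2 q) ^ 2) d.measure) :
    achievable Q N (∫ q, (SLDecomp.sU1 q) ^ 2 ∂d.measure)
      (∫ q, (SLDecomp.sX1 q - SLDecomp.sU2 q) ^ 2 ∂d.measure) := by
  obtain ⟨f, hf, hf1⟩ := exists_measurable_map_gaussianReal_eq one_ne_zero d.κ1
  obtain ⟨g, hg, hg2⟩ := exists_measurable_map_gaussianReal_eq one_ne_zero d.κ2
  have hL : MeasurePreserving (letterMap f g) (letterBase Q N d.μT) d.measure :=
    ⟨measurable_letterMap hf hg, map_letterMap d hf hg hf1 hg2⟩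
  set P := ∫ q, (SLDecomp.sU1 q) ^ 2 ∂d.measure with hPdef
  set S := ∫ q, (SLDecomp.sX1 q - SLDecomp.sU2 q) ^ 2 ∂d.measure with hSdef
  have hcP : Measurable fun q : SLDecomp.Space T => (SLDecomp.sU1 q) ^ 2 := by
    unfold SLDecomp.sU1; fun_prop
  have hcS : Measurable fun q : SLDecomp.Space T => (SLDecomp.sX1 q - SLDecomp.sU2 q) ^ 2 := by
    unfold SLDecomp.sX1 SLDecomp.sU2 SLDecomp.sX0 SLDecomp.sU1; fun_prop
  have hmP := hcP.comp hL.measurable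
  have hmS := hcS.comp hL.measurable
  have hlimP := tendsto_lintegral_abs_integral_sub_average (letterBase Q N d.μT) hmP
    (hL.integrable_comp_of_integrable hP)
  have hlimS := tendsto_lintegral_abs_integral_sub_average (letterBase Q N d.μT) hmS
    (hL.integrable_comp_of_integrable hS)
  simp only [Function.comp_def] at hmP hmS hlimP hlimS
  rw [← integral_map hL.measurable.aemeasurable hcP.aestronglyMeasurable, hL.map_eq,
    ← hPdef] at hlimP
  rw [← integral_map hL.measurable.aemeasurable hcS.aestronglyMeasurable, hL.map_eq,
    ← hSdef] at hlimS
  have hlim := hlimP.add hlimS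
  rw [add_zero] at hlim
  intro ε hε
  obtain ⟨n₀, hn₀⟩ := eventually_atTop.1
    (hlim.eventually_le_const (ENNReal.ofReal_pos.2 hε))
  refine ⟨n₀, fun n hn => ?_⟩
  have hDP := measurable_abs_sub_average n P hmP
  have hD := hDP.add (measurable_abs_sub_average n S hmS)
  have hzip := measurePreserving_zip_base n Q N d.μT
  have hDzip := hD.comp hzip.measurable
  obtain ⟨τ, hτ⟩ := exists_le_lintegral (μ := Measure.pi fun _ : Fin n => d.μT)
    (hDzip.lintegral_prod_right' (ν := base n Q N)).aemeasurable
  rw [← lintegral_prod _ hDzip.aemeasurable] at hτ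
  refine ⟨symbolwiseDesign hf hg τ, le_trans (le_of_eq ?_) (hτ.trans
    ((hzip.lintegral_comp hD).trans_le ((lintegral_add_left hDP _).trans_le (hn₀ n hn))))⟩
  refine lintegral_congr fun ω => ?_
  rw [ENNReal.ofReal_add (abs_nonneg _) (abs_nonneg _)]
  rfl

end

end Witsenhausen
end

section
/- Converse structural lemma for causal encoding and causal decoding (Appendix A): Let n ∈ ℕ and let c ∈ C_ed(n) be any control design with causal encoder and causal decoder, inducing the joint law of (X_0^n, U_1^n, X_1^n, Y_1^n, U_2^n). Let Q be a time random variable uniformly distributed on {1,…,n} and independent of all other variables, and define the single-letter random variables X_0 = X_{0,Q}, U_1 = U_{1,Q}, X_1 = X_{1,Q}, Y_1 = Y_{1,Q}, U_2 = U_{2,Q}, and the auxiliary random variable T = (Y_1^{Q−1}, Q). Then: (i) X_0 is independent of T; (ii) (X_1, Y_1) is conditionally independent of T given (X_0, U_1), and the conditional law of (X_1,Y_1) given (X_0,U_1) is the Witsenhausen channel; (iii) U_2 is conditionally independent of (X_0, U_1, X_1) given (T, Y_1); and moreover (iv) E[c_P(U_1^n)] = E[U_1²] and E[c_S(X_1^n,U_2^n)]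 = E[(X_1 − U_2)²]. -/
/-!
Formalization of results from "Causal Vector-valued Witsenhausen Counterexamples with
Feedback" (Zhao, Le Treust, Oechtering).

Stochastic encoders/decoders (stochastic kernels) are realized as measurable functions of
independent i.i.d. randomization seeds, which is equivalent to the kernel formulation on
standard Borel spaces.
-/

open MeasureTheory ProbabilityTheory
open scoped ENNReal NNReal

namespace Witsenhausen

noncomputable section

/-- The memoryless Witsenhausen channel `P_{X₁,Y₁|X₀,U₁}`, mapping `(x₀, u₁)` to the joint law
of `(X₁, Y₁) = (x₀ + u₁, x₀ + u₁ + Z₁)` with `Z₁ ~ N(0,N)`. -/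
def witChannel (N : ℝ≥0) : Kernel (ℝ × ℝ) (ℝ × ℝ) :=
  ((Kernel.id : Kernel (ℝ × ℝ) (ℝ × ℝ)) ⊗ₖ Kernel.const _ (gaussianReal 0 N)).map
    (fun q => (q.1.1 + q.1.2, q.1.1 + q.1.2 + q.2))

/-- The uniform random time `Q ~ Unif{1, …, n}`. -/
def uniformTime (n : ℕ) [NeZero n] : Measure (Fin n) :=
  (PMF.uniformOfFintype (Fin n)).toMeasure

instance (n : ℕ) [NeZero n] : IsProbabilityMeasure (uniformTime n) := by
  unfold uniformTime; infer_instance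

/-- Sample space extended by the independent uniform random time. -/
abbrev TimedSample (n : ℕ) : Type := Sample n × Fin n

/-- The base randomness extended by an independent uniform random time. -/
def timedBase (n : ℕ) [NeZero n] (Q N : ℝ≥0) : Measure (TimedSample n) :=
  (base n Q N).prod (uniformTime n)

instance (n : ℕ) [NeZero n] (Q N : ℝ≥0) : IsProbabilityMeasure (timedBase n Q N) := by
  unfold timedBase; infer_instance

namespace Design

variable {n : ℕ} (c : Design n)

/-- The single-letter source symbol `X₀ = X_{0,Q}` at the random time. -/
def tX0 (_c : Design n) (ω : TimedSample n) : ℝ := srcX0 ω.1 ω.2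
/-- The single-letter control `U₁ = U_{1,Q}`. -/
def tU1 (ω : TimedSample n) : ℝ := c.U1 ω.1 ω.2
/-- The single-letter interim state `X₁ = X_{1,Q}`. -/
def tX1 (ω : TimedSample n) : ℝ := c.X1 ω.1 ω.2
/-- The single-letter channel output `Y₁ = Y_{1,Q}`. -/
def tY1 (ω : TimedSample n) : ℝ := c.Y1 ω.1 ω.2
/-- The single-letter estimate `U₂ = U_{2,Q}`. -/
def tU2 (ω : TimedSample n) : ℝ := c.U2 ω.1 ω.2
/-- The auxiliary random variable `T = (Y₁^{Q-1}, Q)`, where the strict prefix `Y₁^{Q-1}` is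
encoded as a path padded with `0` from time `Q` on. -/
def tT (ω : TimedSample n) : Path n × Fin n :=
  (fun s => if (s : ℕ) < (ω.2 : ℕ) then c.Y1 ω.1 s else 0, ω.2)

end Design

section Resampling

variable {α β γ ι : Type*} [MeasurableSpace α] [MeasurableSpace β] [MeasurableSpace γ]
  [MeasurableSpace ι]

/-- Replacing one coordinate of a product measure by an independent copy preserves the measure. -/
theorem measurePreserving_update_pi {n : ℕ} (ν : Measure ℝ) [IsProbabilityMeasure ν] (t : Fin n) :
    MeasurePreserving (fun p : Path n × ℝ => Function.update p.1 t p.2)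
      ((Measure.pi fun _ : Fin n => ν).prod ν) (Measure.pi fun _ => ν) := by
  have hm : Measurable fun p : Path n × ℝ => Function.update p.1 t p.2 := by
    refine measurable_pi_lambda _ fun s => ?_
    by_cases h : s = t
    · subst h; simpa using measurable_snd
    · simp only [Function.update_of_ne h]; fun_prop
  refine ⟨hm, (Measure.pi_eq fun s hs => ?_).symm⟩
  rw [Measure.map_apply hm (MeasurableSet.univ_pi hs)]
  have hpre : (fun p : Path n × ℝ => Function.update p.1 t p.2) ⁻¹' Set.univ.pi s
      = (Set.univ.pi (Function.update s t Set.univ)) ×ˢ s t := by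
    ext p
    simp only [Set.mem_preimage, Set.mem_univ_pi, Set.mem_prod]
    constructor
    · intro h
      refine ⟨fun i => ?_, by simpa using h t⟩
      by_cases hi : i = t
      · subst hi; simp
      · simpa [hi] using h i
    · rintro ⟨h, ht⟩ i
      by_cases hi : i = t
      · subst hi; simpa using ht
      · simpa [hi] using h i
  rw [hpre, Measure.prod_prod, Measure.pi_pi, ← Finset.mul_prod_erase _ _ (Finset.mem_univ t),
    ← Finset.mul_prod_erase Finset.univ (fun i => ν (s i)) (Finset.mem_univ t)]
  simp only [Function.update_self, measure_univ, one_mul]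
  rw [mul_comm]
  congr 1
  refine Finset.prod_congr rfl fun i hi => ?_
  rw [Function.update_of_ne (Finset.ne_of_mem_erase hi)]

theorem measurePreserving_resample_snd {μ : Measure α} {ν : Measure γ} [SFinite μ] [SFinite ν]
    {g : α × γ → α} (hg : MeasurePreserving g (μ.prod ν) μ) (ρ : Measure β) [SFinite ρ] :
    MeasurePreserving (fun p : (β × α) × γ => (p.1.1, g (p.1.2, p.2)))
      ((ρ.prod μ).prod ν) (ρ.prod μ) :=
  ((MeasurePreserving.id ρ).prod hg).comp (measurePreserving_prodAssoc ρ μ ν)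

theorem measurePreserving_resample_fst {μ : Measure α} {ν : Measure γ} [SFinite μ] [SFinite ν]
    {g : α × γ → α} (hg : MeasurePreserving g (μ.prod ν) μ) (ρ : Measure β) [SFinite ρ] :
    MeasurePreserving (fun p : (α × β) × γ => (g (p.1.1, p.2), p.1.2))
      ((μ.prod ρ).prod ν) (μ.prod ρ) :=
  (Measure.measurePreserving_swap (μ := ρ) (ν := μ)).comp
    ((measurePreserving_resample_snd hg ρ).comp
      ((Measure.measurePreserving_swap (μ := μ) (ν := ρ)).prod (MeasurePreserving.id ν)))

/-- A family of resampling maps indexed by an independent random index. -/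
theorem measurePreserving_resample_index {μ : Measure α} {ν : Measure γ} [SFinite μ] [SFinite ν]
    [Countable ι] [MeasurableSingletonClass ι] {g : ι → α × γ → α}
    (hg : ∀ i, MeasurePreserving (g i) (μ.prod ν) μ) (τ : Measure ι) [SFinite τ] :
    MeasurePreserving (fun p : (α × ι) × γ => (g p.1.2 (p.1.1, p.2), p.1.2))
      ((μ.prod τ).prod ν) (μ.prod τ) := by
  have hskew : MeasurePreserving (fun p : ι × (α × γ) => (p.1, g p.1 p.2))
      (τ.prod (μ.prod ν)) (τ.prod μ) :=
    (MeasurePreserving.id τ).skew_product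
      (measurable_from_prod_countable_right fun i => (hg i).measurable)
      (Filter.Eventually.of_forall fun i => (hg i).map_eq)
  exact (Measure.measurePreserving_swap (μ := τ) (ν := μ)).comp
    (hskew.comp ((measurePreserving_prodAssoc τ μ ν).comp
      ((Measure.measurePreserving_swap (μ := μ) (ν := τ)).prod (MeasurePreserving.id ν))))

/-- If `W` can be resampled by `Φ` without affecting `P`, then `(P, W)` has a product law. -/
theorem map_prodMk_eq_prod_of_resample {μ : Measure α} [SFinite μ]
    {ν : Measure γ} [IsProbabilityMeasure ν] {Φ : α × γ → α}
    (hΦ : MeasurePreserving Φ (μ.prod ν) μ) {W : α → γ} {P : α → β}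
    (hW : Measurable W) (hP : Measurable P)
    (hWΦ : ∀ p, W (Φ p) = p.2) (hPΦ : ∀ p, P (Φ p) = P p.1) :
    μ.map (fun ω => (P ω, W ω)) = (μ.map P).prod ν := by
  have hfun : (fun ω => (P ω, W ω)) ∘ Φ = Prod.map P id := by
    funext p
    exact Prod.ext (hPΦ p) (hWΦ p)
  conv_lhs => rw [← hΦ.map_eq]
  rw [Measure.map_map (hP.prodMk hW) hΦ.measurable, hfun,
    ← Measure.map_prod_map _ _ hP measurable_id, Measure.map_id]

theorem indepFun_of_map_prodMk_eq_prod {μ : Measure α} [IsProbabilityMeasure μ]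
    {ν : Measure γ} [IsProbabilityMeasure ν] {W : α → γ} {P : α → β}
    (hW : Measurable W) (hP : Measurable P)
    (h : μ.map (fun ω => (P ω, W ω)) = (μ.map P).prod ν) :
    IndepFun W P μ := by
  have := Measure.isProbabilityMeasure_map (μ := μ) hP.aemeasurable
  have hlaw : μ.map W = ν := by
    have hsnd := congrArg (Measure.map Prod.snd) h
    rw [Measure.map_map measurable_snd (hP.prodMk hW), Measure.map_snd_prod] at hsnd
    simpa [Function.comp_def] using hsnd
  refine ((indepFun_iff_map_prod_eq_prod_map_map hP.aemeasurable hW.aemeasurable).2 ?_).symm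
  rw [h, hlaw]

/-- If `(P, W)` has a product law, then the conditional law of `F (P, W)` given `P` is obtained by
freezing the first argument of `F`. -/
theorem condDistrib_eq_of_map_prodMk_eq_prod {δ : Type*} [MeasurableSpace δ]
    [StandardBorelSpace δ] [Nonempty δ] {μ : Measure α} [IsProbabilityMeasure μ]
    {ν : Measure γ} [IsProbabilityMeasure ν] {W : α → γ} {P : α → β}
    (hW : Measurable W) (hP : Measurable P)
    (h : μ.map (fun ω => (P ω, W ω)) = (μ.map P).prod ν)
    {F : β × γ → δ} (hF : Measurable F) {Y : α → δ} (hY : ∀ ω, Y ω = F (P ω, W ω))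
    {κ : Kernel β δ} (hκ : ∀ b, κ b = ν.map fun w => F (b, w)) :
    condDistrib Y P μ =ᵐ[μ.map P] κ := by
  have hFb (b : β) : Measurable fun w => F (b, w) := hF.comp measurable_prodMk_left
  have : IsMarkovKernel κ :=
    ⟨fun b => by rw [hκ]; exact Measure.isProbabilityMeasure_map (hFb b).aemeasurable⟩
  have hYF : Y = fun ω => F (P ω, W ω) := funext hY
  have hYm : Measurable Y := hYF ▸ hF.comp (hP.prodMk hW)
  refine condDistrib_ae_eq_of_measure_eq_compProd P hYm.aemeasurable ?_
  have hcomp : μ.map (fun ω => (P ω, Y ω))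
      = ((μ.map P).prod ν).map (fun p => (p.1, F p)) := by
    rw [← h, Measure.map_map (measurable_fst.prodMk hF) (hP.prodMk hW), hYF]
    rfl
  rw [hcomp]
  refine Measure.ext_of_lintegral _ fun f hf => ?_
  rw [lintegral_map hf (measurable_fst.prodMk hF), Measure.lintegral_compProd hf,
    lintegral_prod (fun p => f (p.1, F p)) (hf.comp (measurable_fst.prodMk hF)).aemeasurable]
  refine lintegral_congr fun b => ?_
  rw [hκ, lintegral_map (f := fun y => f (b, y)) (hf.comp measurable_prodMk_left) (hFb b)]

end Resampling

theorem witChannel_apply (N : ℝ≥0) (p : ℝ × ℝ) :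
    witChannel N p = (gaussianReal 0 N).map fun z => (p.1 + p.2, p.1 + p.2 + z) := by
  have hF : Measurable fun q : (ℝ × ℝ) × ℝ => (q.1.1 + q.1.2, q.1.1 + q.1.2 + q.2) := by fun_prop
  refine Measure.ext_of_lintegral _ fun f hf => ?_
  rw [witChannel, Kernel.map_apply _ hF, lintegral_map hf hF,
    Kernel.lintegral_compProd _ _ _ (f := fun q : (ℝ × ℝ) × ℝ => f (q.1.1 + q.1.2, q.1.1 + q.1.2 + q.2))
      (hf.comp hF), Kernel.id_apply, lintegral_dirac',
    lintegral_map hf (by fun_prop)]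
  · simp
  · simp only [Kernel.const_apply]
    exact (hf.comp hF).lintegral_prod_right'

theorem lintegral_uniformTime (n : ℕ) [NeZero n] (f : Fin n → ℝ≥0∞) :
    ∫⁻ t, f t ∂(uniformTime n) = ENNReal.ofReal (1 / (n : ℝ)) * ∑ t, f t := by
  have hn : (0 : ℝ) < n := by exact_mod_cast Nat.pos_of_ne_zero (NeZero.ne n)
  rw [lintegral_fintype, Finset.mul_sum]
  refine Finset.sum_congr rfl fun t _ => ?_
  rw [uniformTime, PMF.toMeasure_apply_singleton _ _ (measurableSet_singleton t),
    PMF.uniformOfFintype_apply, Fintype.card_fin, one_div, ENNReal.ofReal_inv_of_pos hn,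
    ENNReal.ofReal_natCast, mul_comm]

/-- The expected time average equals the expectation at an independent uniform time. -/
theorem lintegral_average_eq_timedBase (Q N : ℝ≥0) {n : ℕ} [NeZero n]
    {h : Sample n → Fin n → ℝ} (hm : ∀ t, Measurable fun ω => h ω t) (h0 : ∀ ω t, 0 ≤ h ω t) :
    ∫⁻ ω, ENNReal.ofReal ((1 / (n : ℝ)) * ∑ t, h ω t) ∂(base n Q N)
      = ∫⁻ ω, ENNReal.ofReal (h ω.1 ω.2) ∂(timedBase n Q N) := by
  have hj : Measurable fun ω : TimedSample n => ENNReal.ofReal (h ω.1 ω.2) :=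
    (measurable_from_prod_countable_left (f := fun ω : TimedSample n => h ω.1 ω.2) hm).ennreal_ofReal
  rw [timedBase, lintegral_prod _ hj.aemeasurable]
  refine lintegral_congr fun ω => ?_
  rw [lintegral_uniformTime, ENNReal.ofReal_mul (by positivity),
    ENNReal.ofReal_sum_of_nonneg fun t _ => h0 ω t]

section Resample

variable {n : ℕ}

/-- Replace the source symbol at the random time. -/
def resampleX0 (p : TimedSample n × ℝ) : TimedSample n :=
  ((Function.update p.1.1.1 p.1.2 p.2, p.1.1.2), p.1.2)

/-- Replace the noise symbol at the random time. -/
def resampleZ (p : TimedSample n × ℝ) : TimedSample n :=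
  ((p.1.1.1, Function.update p.1.1.2.1 p.1.2 p.2, p.1.1.2.2), p.1.2)

/-- Replace the decoder seed at the random time. -/
def resampleW (p : TimedSample n × ℝ) : TimedSample n :=
  ((p.1.1.1, p.1.1.2.1, p.1.1.2.2.1, Function.update p.1.1.2.2.2 p.1.2 p.2), p.1.2)

variable [NeZero n] (Q N : ℝ≥0)

theorem measurePreserving_resampleX0 :
    MeasurePreserving resampleX0 ((timedBase n Q N).prod (gaussianReal 0 Q)) (timedBase n Q N) :=
  measurePreserving_resample_index (ι := Fin n) (fun t => measurePreserving_resample_fst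
    (measurePreserving_update_pi (gaussianReal 0 Q) t) _) (uniformTime n)

theorem measurePreserving_resampleZ :
    MeasurePreserving resampleZ ((timedBase n Q N).prod (gaussianReal 0 N)) (timedBase n Q N) :=
  measurePreserving_resample_index (ι := Fin n) (fun t => measurePreserving_resample_snd
    (measurePreserving_resample_fst (measurePreserving_update_pi (gaussianReal 0 N) t) _)
    (iidGaussian n Q)) (uniformTime n)

theorem measurePreserving_resampleW :
    MeasurePreserving resampleW ((timedBase n Q N).prod (gaussianReal 0 1)) (timedBase n Q N) :=
  measurePreserving_resample_index (ι := Fin n) (fun t => measurePreserving_resample_snd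
    (measurePreserving_resample_snd (measurePreserving_resample_snd
      (measurePreserving_update_pi (gaussianReal 0 1) t) (iidGaussian n 1)) (iidGaussian n N))
    (iidGaussian n Q)) (uniformTime n)

end Resample

theorem measurable_coord_at_time {n : ℕ} : Measurable fun p : Path n × Fin n => p.1 p.2 :=
  measurable_from_prod_countable_left fun t => measurable_pi_apply t

namespace Design

variable {n : ℕ} (c : Design n)

theorem measurable_U1 : Measurable c.U1 := by
  refine measurable_pi_lambda _ fun t => (c.enc_meas t).comp (f := fun ω : Sample n =>
    (srcX0 ω, seedV ω t)) ?_
  unfold srcX0 seedV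
  fun_prop

theorem measurable_X1 : Measurable c.X1 := by
  refine measurable_pi_lambda _ fun t =>
    Measurable.add ?_ ((measurable_pi_apply t).comp c.measurable_U1)
  unfold srcX0
  fun_prop

theorem measurable_Y1 : Measurable c.Y1 := by
  refine measurable_pi_lambda _ fun t =>
    Measurable.add ((measurable_pi_apply t).comp c.measurable_X1) ?_
  unfold noiseZ
  fun_prop

theorem measurable_U2 : Measurable c.U2 := by
  refine measurable_pi_lambda _ fun t => (c.dec_meas t).comp (c.measurable_Y1.prodMk ?_)
  fun_prop

theorem measurable_tX0 : Measurable c.tX0 :=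
  measurable_coord_at_time.comp (measurable_fst.prodMap measurable_id)

theorem measurable_tU1 : Measurable c.tU1 :=
  measurable_coord_at_time.comp (c.measurable_U1.prodMap measurable_id)

theorem measurable_tX1 : Measurable c.tX1 :=
  measurable_coord_at_time.comp (c.measurable_X1.prodMap measurable_id)

theorem measurable_tY1 : Measurable c.tY1 :=
  measurable_coord_at_time.comp (c.measurable_Y1.prodMap measurable_id)

theorem measurable_tT : Measurable c.tT := by
  refine measurable_from_prod_countable_left fun t =>
    (measurable_pi_lambda _ fun s => ?_).prodMk measurable_const
  by_cases h : (s : ℕ) < (t : ℕ)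
  · simpa [h, Function.comp_def] using (measurable_pi_apply s).comp c.measurable_Y1
  · simp [h]

theorem tT_resampleX0 (p : TimedSample n × ℝ) : c.tT (resampleX0 p) = c.tT p.1 := by
  refine Prod.ext (funext fun s => ?_) rfl
  change (if (s : ℕ) < (p.1.2 : ℕ) then c.Y1 (Function.update p.1.1.1 p.1.2 p.2, p.1.1.2) s else 0)
    = if (s : ℕ) < (p.1.2 : ℕ) then c.Y1 p.1.1 s else 0
  split_ifs with hs
  · have hne : ∀ r, r ≤ s → r ≠ p.1.2 := fun r hr => ne_of_lt (lt_of_le_of_lt hr hs)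
    simp only [Y1, X1, U1, srcX0, noiseZ, seedV]
    rw [Function.update_of_ne (hne s le_rfl),
      c.enc_causal s (Function.update p.1.1.1 p.1.2 p.2) p.1.1.1 _
        fun r hr => Function.update_of_ne (hne r hr) _ _]
  · rfl

theorem tT_resampleZ (p : TimedSample n × ℝ) : c.tT (resampleZ p) = c.tT p.1 := by
  refine Prod.ext (funext fun s => ?_) rfl
  change (if (s : ℕ) < (p.1.2 : ℕ) then
      c.Y1 (p.1.1.1, Function.update p.1.1.2.1 p.1.2 p.2, p.1.1.2.2) s else 0)
    = if (s : ℕ) < (p.1.2 : ℕ) then c.Y1 p.1.1 s else 0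
  split_ifs with hs
  · simp only [Y1, X1, U1, srcX0, noiseZ, seedV]
    rw [Function.update_of_ne (Fin.ne_of_lt hs)]
  · rfl

/-- The decoder at time `Q` as a function of the auxiliary variable `T`, the current output `Y₁`
and the decoder seed. -/
def decT (p : ((Path n × Fin n) × ℝ) × ℝ) : ℝ :=
  c.dec p.1.1.2 (Function.update p.1.1.1 p.1.1.2 p.1.2) p.2

theorem measurable_decT : Measurable c.decT := by
  have hswap : Measurable fun p : (Path n × ℝ × ℝ) × Fin n =>
      c.dec p.2 (Function.update p.1.1 p.2 p.1.2.1) p.1.2.2 := by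
    refine measurable_from_prod_countable_left fun t => (c.dec_meas t).comp
      (f := fun p : Path n × ℝ × ℝ => (Function.update p.1 t p.2.1, p.2.2)) ?_
    refine Measurable.prodMk ?_ (by fun_prop)
    refine measurable_pi_lambda _ fun s => ?_
    by_cases h : s = t
    · subst h; simp only [Function.update_self]; fun_prop
    · simp only [Function.update_of_ne h]; fun_prop
  exact hswap.comp (f := fun p : ((Path n × Fin n) × ℝ) × ℝ =>
    ((p.1.1.1, p.1.2, p.2), p.1.1.2)) (by fun_prop)

theorem tU2_eq_decT (ω : TimedSample n) :
    c.tU2 ω = c.decT ((c.tT ω, c.tY1 ω), seedW ω.1 ω.2) := by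
  refine c.dec_causal _ _ _ _ fun s hs => ?_
  change c.Y1 ω.1 s = Function.update (c.tT ω).1 ω.2 (c.tY1 ω) s
  rcases hs.lt_or_eq with h | h
  · rw [Function.update_of_ne h.ne]
    simp only [tT]
    rw [if_pos (show (s : ℕ) < (ω.2 : ℕ) from h)]
  · subst h
    rw [Function.update_self, tY1]

end Design

/-- **Converse structural lemma for causal encoding and causal decoding** (Appendix A):
for any control design `c ∈ C_ed(n)`, with `Q` an independent uniform time, the single-letter
variables `X₀ = X_{0,Q}`, `U₁ = U_{1,Q}`, `X₁ = X_{1,Q}`, `Y₁ = Y_{1,Q}`, `U₂ = U_{2,Q}` and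
the auxiliary variable `T = (Y₁^{Q-1}, Q)` satisfy:
(i) `X₀` is independent of `T`;
(ii) the conditional law of `(X₁, Y₁)` given `(X₀, U₁, T)` is the Witsenhausen channel and
depends only on `(X₀, U₁)` (in particular `(X₁, Y₁)` is conditionally independent of `T`
given `(X₀, U₁)`);
(iii) `U₂` is conditionally independent of `(X₀, U₁, X₁)` given `(T, Y₁)` (its conditional
law given `(T, Y₁, X₀, U₁, X₁)` coincides a.e. with the one given `(T, Y₁)`);
(iv) `E[c_P(U₁ⁿ)] = E[U₁²]` and `E[c_S(X₁ⁿ, U₂ⁿ)] = E[(X₁ - U₂)²]`. -/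
theorem converse_structure (Q N : ℝ≥0) (hQ : 0 < Q) (hN : 0 < N)
    (n : ℕ) [NeZero n] (c : Design n) :
    -- (i)
    IndepFun c.tX0 c.tT (timedBase n Q N) ∧
    -- (ii)
    (∀ᵐ p ∂((timedBase n Q N).map (fun ω => (c.tX0 ω, c.tU1 ω, c.tT ω))),
      condDistrib (fun ω => (c.tX1 ω, c.tY1 ω)) (fun ω => (c.tX0 ω, c.tU1 ω, c.tT ω))
          (timedBase n Q N) p
        = (witChannel N).comap (fun p : ℝ × ℝ × (Path n × Fin n) => (p.1, p.2.1))
            (by fun_prop) p) ∧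
    -- (iii)
    (∀ᵐ p ∂((timedBase n Q N).map
        (fun ω => (c.tT ω, c.tY1 ω, c.tX0 ω, c.tU1 ω, c.tX1 ω))),
      condDistrib c.tU2 (fun ω => (c.tT ω, c.tY1 ω, c.tX0 ω, c.tU1 ω, c.tX1 ω))
          (timedBase n Q N) p
        = condDistrib c.tU2 (fun ω => (c.tT ω, c.tY1 ω)) (timedBase n Q N) (p.1, p.2.1)) ∧
    -- (iv)
    (∫⁻ ω, ENNReal.ofReal (costP (c.U1 ω)) ∂(base n Q N)
        = ∫⁻ ω, ENNReal.ofReal ((c.tU1 ω) ^ 2) ∂(timedBase n Q N)) ∧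
    (∫⁻ ω, ENNReal.ofReal (costS (c.X1 ω) (c.U2 ω)) ∂(base n Q N)
        = ∫⁻ ω, ENNReal.ofReal ((c.tX1 ω - c.tU2 ω) ^ 2) ∂(timedBase n Q N)) := by
  have hX0 := c.measurable_tX0
  have hU1 := c.measurable_tU1
  have hX1 := c.measurable_tX1
  have hY1 := c.measurable_tY1
  have hT := c.measurable_tT
  refine ⟨?_, ?_, ?_, ?_, ?_⟩
  · exact indepFun_of_map_prodMk_eq_prod hX0 hT
      (map_prodMk_eq_prod_of_resample (measurePreserving_resampleX0 Q N) hX0 hT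
        (fun p => Function.update_self _ _ _) c.tT_resampleX0)
  · have hZ : Measurable fun ω : TimedSample n => noiseZ ω.1 ω.2 :=
      measurable_coord_at_time.comp
        ((measurable_fst.comp measurable_snd).prodMap (g := (id : Fin n → Fin n)) measurable_id)
    have hP := hX0.prodMk (hU1.prodMk hT)
    exact condDistrib_eq_of_map_prodMk_eq_prod hZ hP
      (map_prodMk_eq_prod_of_resample (measurePreserving_resampleZ Q N) hZ hP
        (fun p => Function.update_self _ _ _)
        (fun p => Prod.ext rfl (Prod.ext rfl (c.tT_resampleZ p))))
      (F := fun q : (ℝ × ℝ × (Path n × Fin n)) × ℝ =>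
        (q.1.1 + q.1.2.1, q.1.1 + q.1.2.1 + q.2)) (by fun_prop) (fun ω => rfl)
      (fun b => by rw [Kernel.comap_apply, witChannel_apply])
  · have hW : Measurable fun ω : TimedSample n => seedW ω.1 ω.2 :=
      measurable_coord_at_time.comp
        ((measurable_snd.comp (measurable_snd.comp measurable_snd)).prodMap
          (g := (id : Fin n → Fin n)) measurable_id)
    have hlong := hT.prodMk (hY1.prodMk (hX0.prodMk (hU1.prodMk hX1)))
    have hshort := hT.prodMk hY1
    have hproj : Measurable fun p : (Path n × Fin n) × ℝ × ℝ × ℝ × ℝ => (p.1, p.2.1) := by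
      fun_prop
    let κ : Kernel ((Path n × Fin n) × ℝ) ℝ :=
      (Kernel.id ×ₖ Kernel.const _ (gaussianReal 0 1)).map c.decT
    have hκ (b : (Path n × Fin n) × ℝ) :
        κ b = (gaussianReal 0 1).map fun w => c.decT (b, w) := by
      rw [Kernel.map_apply _ c.measurable_decT, Kernel.prod_apply, Kernel.id_apply,
        Kernel.const_apply, Measure.dirac_prod,
        Measure.map_map c.measurable_decT measurable_prodMk_left]
      rfl
    have h1 := condDistrib_eq_of_map_prodMk_eq_prod hW hlong
      (map_prodMk_eq_prod_of_resample (measurePreserving_resampleW Q N) hW hlong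
        (fun p => Function.update_self _ _ _) (fun p => rfl))
      (F := fun q => c.decT ((q.1.1, q.1.2.1), q.2))
      (c.measurable_decT.comp (by fun_prop)) c.tU2_eq_decT
      (κ := κ.comap _ hproj) (fun b => by rw [Kernel.comap_apply, hκ])
    have h2 := condDistrib_eq_of_map_prodMk_eq_prod hW hshort
      (map_prodMk_eq_prod_of_resample (measurePreserving_resampleW Q N) hW hshort
        (fun p => Function.update_self _ _ _) (fun p => rfl))
      c.measurable_decT c.tU2_eq_decT hκ
    have h3 : ∀ᵐ p ∂((timedBase n Q N).map
        (fun ω => (c.tT ω, c.tY1 ω, c.tX0 ω, c.tU1 ω, c.tX1 ω))),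
        condDistrib c.tU2 (fun ω => (c.tT ω, c.tY1 ω)) (timedBase n Q N) (p.1, p.2.1)
          = κ (p.1, p.2.1) := by
      refine ae_of_ae_map (f := fun p : (Path n × Fin n) × ℝ × ℝ × ℝ × ℝ => (p.1, p.2.1))
        (p := fun q => condDistrib c.tU2 (fun ω => (c.tT ω, c.tY1 ω)) (timedBase n Q N) q = κ q)
        hproj.aemeasurable ?_
      rw [Measure.map_map hproj hlong]
      exact h2
    filter_upwards [h1, h3] with p hp1 hp3
    rw [hp1, hp3, Kernel.comap_apply]
  · exact lintegral_average_eq_timedBase Q N (h := fun ω t => c.U1 ω t ^ 2)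
      (fun t => ((measurable_pi_apply t).comp c.measurable_U1).pow_const 2)
      (fun ω t => sq_nonneg _)
  · exact lintegral_average_eq_timedBase Q N (h := fun ω t => (c.X1 ω t - c.U2 ω t) ^ 2)
      (fun t => (((measurable_pi_apply t).comp c.measurable_X1).sub
        ((measurable_pi_apply t).comp c.measurable_U2)).pow_const 2)
      (fun ω t => sq_nonneg _)

end

end Witsenhausen
end

section
/- Cardinality bound for the time-sharing variable (Theorem 1): If a pair (P,S) satisfies P = E[U_1²] and S = E[(X_1 − U_2)²] for some joint distribution of (X_0, T, U_1, X_1, Y_1, U_2) decomposing as P_{X_0} P_T P_{U_1|X_0,T} P_{X_1,Y_1|X_0,U_1} P_{U_2|T,Y_1} with T taking values in an arbitrary finite set, then there exists a joint distribution of the same decomposed form, with a time-sharing variable T' taking values in a set of cardinality at most 2, such that P = E[U_1²] and S = E[(X_1 − U_2)²] under the new distribution. -/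
/-!
Formalization of results from "Causal Vector-valued Witsenhausen Counterexamples with
Feedback" (Zhao, Le Treust, Oechtering).

Stochastic encoders/decoders (stochastic kernels) are realized as measurable functions of
independent i.i.d. randomization seeds, which is equivalent to the kernel formulation on
standard Borel spaces.
-/

open MeasureTheory ProbabilityTheory
open scoped ENNReal NNReal

namespace Witsenhausen

noncomputable section

/-- A planar centroid dominates, in its second coordinate, a convex combination of two of the
averaged points having the same first coordinate. -/
theorem exists_pair_average_le {T : Type*} [MeasurableSpace T] [Finite T] {μ : Measure T}
    [IsProbabilityMeasure μ] {p s : T → ℝ} (hp : Integrable p μ) (hs : Integrable s μ)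
    {G : Set T} (hG : ∀ᵐ t ∂μ, t ∈ G) :
    ∃ i ∈ G, ∃ j ∈ G, ∃ l : ℝ, 0 ≤ l ∧ l ≤ 1 ∧
      l * p i + (1 - l) * p j = ∫ t, p t ∂μ ∧
      l * s i + (1 - l) * s j ≤ ∫ t, s t ∂μ := by
  classical
  have := Fintype.ofFinite T
  set P := ∫ t, p t ∂μ with hP
  set S := ∫ t, s t ∂μ with hS
  by_contra! hcon
  obtain ⟨c, hlo, hhi⟩ := Order.exists_between_finsets
    ((Finset.univ.filter fun t => t ∈ G ∧ P < p t).image fun t => -(s t - S) / (p t - P))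
    ((Finset.univ.filter fun t => t ∈ G ∧ p t < P).image fun t => (s t - S) / (P - p t)) (by
      simp only [Finset.mem_image, Finset.mem_filter, Finset.mem_univ, true_and]
      rintro _ ⟨i, ⟨hiG, hi⟩, rfl⟩ _ ⟨j, ⟨hjG, hj⟩, rfl⟩
      have hi' : 0 < p i - P := sub_pos.2 hi
      have hj' : 0 < P - p j := sub_pos.2 hj
      have hij : 0 < p i - p j := by linarith
      have h := hcon i hiG j hjG ((P - p j) / (p i - p j)) (by positivity)
        ((div_le_one hij).2 (by linarith)) (by field_simp; ring)
      have e : (P - p j) / (p i - p j) * s i + (1 - (P - p j) / (p i - p j)) * s j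
          = ((P - p j) * s i + (p i - P) * s j) / (p i - p j) := by field_simp; ring
      rw [e, lt_div_iff₀ hij] at h
      rw [div_lt_div_iff₀ hi' hj']
      nlinarith)
  have hpos : ∀ᵐ t ∂μ, 0 < (s t - S) + c * (p t - P) := by
    filter_upwards [hG] with t ht
    rcases lt_trichotomy (p t) P with h | h | h
    · have := hhi _ (Finset.mem_image_of_mem _ (by simp [ht, h] : t ∈ _))
      rw [lt_div_iff₀ (sub_pos.2 h)] at this
      linarith
    · have := hcon t ht t ht 1 zero_le_one le_rfl (by linarith)
      rw [h]
      linarith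
    · have := hlo _ (Finset.mem_image_of_mem _ (by simp [ht, h] : t ∈ _))
      rw [div_lt_iff₀ (sub_pos.2 h)] at this
      linarith
  have hi1 : Integrable (fun t => s t - S) μ := hs.sub (integrable_const S)
  have hi2 : Integrable (fun t => c * (p t - P)) μ := (hp.sub (integrable_const P)).const_mul c
  have hzero : ∫ t, ((s t - S) + c * (p t - P)) ∂μ = 0 := by
    rw [integral_add hi1 hi2, integral_const_mul, integral_sub hs (integrable_const _),
      integral_sub hp (integrable_const _)]
    simp [← hP, ← hS]
  have h0 := (integral_eq_zero_iff_of_nonneg_ae (hpos.mono fun _ h => h.le) (hi1.add hi2)).1 hzero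
  obtain ⟨t, ht1, ht2⟩ := (hpos.and h0).exists
  exact ht1.ne' ht2

/-- A nonnegative function has finite integral `r` iff its lower integral is `r`. -/
theorem integrable_and_eq_integral_iff {α : Type*} [MeasurableSpace α] {μ : Measure α}
    {f : α → ℝ} (hf : Measurable f) (h0 : ∀ x, 0 ≤ f x) {r : ℝ} :
    (Integrable f μ ∧ r = ∫ x, f x ∂μ) ↔
      0 ≤ r ∧ ∫⁻ x, ENNReal.ofReal (f x) ∂μ = ENNReal.ofReal r := by
  constructor
  · rintro ⟨hi, rfl⟩
    exact ⟨integral_nonneg h0, (ofReal_integral_eq_lintegral_ofReal hi (ae_of_all _ h0)).symm⟩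
  · rintro ⟨hr, h⟩
    refine ⟨(lintegral_ofReal_ne_top_iff_integrable hf.aestronglyMeasurable (ae_of_all _ h0)).1
      (by rw [h]; exact ENNReal.ofReal_ne_top), ?_⟩
    rw [integral_eq_lintegral_of_nonneg_ae (ae_of_all _ h0) hf.aestronglyMeasurable, h,
      ENNReal.toReal_ofReal hr]

/-- Centered Gaussian noise of variance `c` raises an expected squared deviation by `c`. -/
theorem lintegral_sq_sub_gaussianReal (x : ℝ) (c : ℝ≥0) :
    ∫⁻ v, ENNReal.ofReal ((x - v) ^ 2) ∂gaussianReal 0 c = ENNReal.ofReal (x ^ 2) + c := by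
  have h2 : Integrable (fun v : ℝ => v ^ 2) (gaussianReal 0 c) :=
    (memLp_id_gaussianReal 2).integrable_sq
  have h1 : Integrable (fun v : ℝ => v) (gaussianReal 0 c) :=
    (memLp_id_gaussianReal 1).integrable le_rfl
  have hv : ∫ v, v ^ 2 ∂gaussianReal 0 c = c := by
    have := variance_fun_id_gaussianReal (μ := 0) (v := c)
    rwa [variance_of_integral_eq_zero (by fun_prop) (by simp)] at this
  have e : (fun v : ℝ => (x - v) ^ 2) = fun v => (x ^ 2 - 2 * x * v) + v ^ 2 := by
    ext v; ring
  have hi : Integrable (fun v : ℝ => x ^ 2 - 2 * x * v) (gaussianReal 0 c) :=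
    (integrable_const _).sub (h1.const_mul _)
  have hsq : Integrable (fun v : ℝ => (x - v) ^ 2) (gaussianReal 0 c) := by
    rw [e]; exact hi.add h2
  rw [← ofReal_integral_eq_lintegral_ofReal hsq (ae_of_all _ fun _ => sq_nonneg _), e,
    integral_add hi h2, integral_sub (integrable_const _) (h1.const_mul _), integral_const_mul, hv]
  simp [ENNReal.ofReal_add (sq_nonneg x) c.coe_nonneg]

namespace SLDecomp

variable {Q N : ℝ≥0} {T T' : Type} [MeasurableSpace T] [MeasurableSpace T']

theorem lintegral_measure (d : SLDecomp Q N T) {f : Space T → ℝ≥0∞} (hf : Measurable f) :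
    ∫⁻ q, f q ∂d.measure = ∫⁻ t, ∫⁻ x, ∫⁻ u, ∫⁻ z, ∫⁻ w, f ((((x, t), u), z), w)
      ∂d.κ2 (t, x + u + z) ∂gaussianReal 0 N ∂d.κ1 (x, t) ∂gaussianReal 0 Q ∂d.μT := by
  let η := d.κ2.comap (fun q : ((ℝ × T) × ℝ) × ℝ => (q.1.1.2, q.1.1.1 + q.1.2 + q.2))
      (by fun_prop)
  have m1 : Measurable fun q => ∫⁻ w, f (q, w) ∂η q := hf.lintegral_kernel_prod_right'
  have m2 : Measurable fun r => ∫⁻ z, ∫⁻ w, f ((r, z), w) ∂η (r, z) ∂gaussianReal 0 N :=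
    m1.lintegral_prod_right'
  have m3 : Measurable fun a => ∫⁻ u, ∫⁻ z, ∫⁻ w, f (((a, u), z), w) ∂η ((a, u), z)
      ∂gaussianReal 0 N ∂d.κ1 a := m2.lintegral_kernel_prod_right'
  rw [measure, Measure.lintegral_compProd hf, lintegral_prod _ m1.aemeasurable,
    Measure.lintegral_compProd m2, lintegral_prod_symm _ m3.aemeasurable]
  rfl

/-- The power cost `E[U₁² | T = t]`. -/
def powerCost (d : SLDecomp Q N T) (t : T) : ℝ≥0∞ :=
  ∫⁻ x, ∫⁻ u, ENNReal.ofReal (u ^ 2) ∂d.κ1 (x, t) ∂gaussianReal 0 Q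

/-- The estimation cost `E[(X₁ - U₂)² | T = t]`. -/
def estimationCost (d : SLDecomp Q N T) (t : T) : ℝ≥0∞ :=
  ∫⁻ x, ∫⁻ u, ∫⁻ z, ∫⁻ w, ENNReal.ofReal ((x + u - w) ^ 2)
    ∂d.κ2 (t, x + u + z) ∂gaussianReal 0 N ∂d.κ1 (x, t) ∂gaussianReal 0 Q

theorem measurable_powerCost (d : SLDecomp Q N T) : Measurable d.powerCost := by
  have m : Measurable fun a : ℝ × T => ∫⁻ u, ENNReal.ofReal (u ^ 2) ∂d.κ1 a :=
    Measurable.lintegral_kernel (f := fun u : ℝ => ENNReal.ofReal (u ^ 2)) (by fun_prop)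
  exact m.lintegral_prod_left'

theorem measurable_estimationCost (d : SLDecomp Q N T) : Measurable d.estimationCost := by
  let η := d.κ2.comap (fun q : ((ℝ × T) × ℝ) × ℝ => (q.1.1.2, q.1.1.1 + q.1.2 + q.2))
      (by fun_prop)
  have m0 : Measurable fun q : Space T =>
      ENNReal.ofReal ((q.1.1.1.1 + q.1.1.2 - q.2) ^ 2) := by fun_prop
  have m1 : Measurable fun q : ((ℝ × T) × ℝ) × ℝ =>
      ∫⁻ w, ENNReal.ofReal ((q.1.1.1 + q.1.2 - w) ^ 2) ∂η q := m0.lintegral_kernel_prod_right'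
  have m2 : Measurable fun r : (ℝ × T) × ℝ => ∫⁻ z, ∫⁻ w,
      ENNReal.ofReal ((r.1.1 + r.2 - w) ^ 2) ∂η (r, z) ∂gaussianReal 0 N :=
    m1.lintegral_prod_right'
  have m3 : Measurable fun a : ℝ × T => ∫⁻ u, ∫⁻ z, ∫⁻ w,
      ENNReal.ofReal ((a.1 + u - w) ^ 2) ∂η ((a, u), z) ∂gaussianReal 0 N ∂d.κ1 a :=
    m2.lintegral_kernel_prod_right'
  exact m3.lintegral_prod_left'

theorem realizes_iff (d : SLDecomp Q N T) (P S : ℝ) :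
    d.realizes P S ↔
      (0 ≤ P ∧ ∫⁻ t, d.powerCost t ∂d.μT = ENNReal.ofReal P) ∧
      (0 ≤ S ∧ ∫⁻ t, d.estimationCost t ∂d.μT = ENNReal.ofReal S) := by
  have mU : Measurable fun q : Space T => (sU1 q) ^ 2 := by unfold sU1; fun_prop
  have mX : Measurable fun q : Space T => (sX1 q - sU2 q) ^ 2 := by
    unfold sX1 sX0 sU1 sU2; fun_prop
  have eP : ∫⁻ q, ENNReal.ofReal ((sU1 q) ^ 2) ∂d.measure = ∫⁻ t, d.powerCost t ∂d.μT := by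
    rw [d.lintegral_measure mU.ennreal_ofReal]
    simp [sU1, powerCost]
  have eS : ∫⁻ q, ENNReal.ofReal ((sX1 q - sU2 q) ^ 2) ∂d.measure
      = ∫⁻ t, d.estimationCost t ∂d.μT := by
    rw [d.lintegral_measure mX.ennreal_ofReal]
    rfl
  rw [← eP, ← eS, ← integrable_and_eq_integral_iff mU fun _ => sq_nonneg _,
    ← integrable_and_eq_integral_iff mX fun _ => sq_nonneg _]
  unfold realizes
  tauto

/-- Replace the time-sharing variable by one of law `ν` selecting the former value via `f`. -/
def reindex (d : SLDecomp Q N T) (f : T' → T) (hf : Measurable f) (ν : Measure T')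
    [IsProbabilityMeasure ν] : SLDecomp Q N T' where
  μT := ν
  probT := inferInstance
  κ1 := d.κ1.comap (Prod.map id f) (by fun_prop)
  markov1 := inferInstance
  κ2 := d.κ2.comap (Prod.map f id) (by fun_prop)
  markov2 := inferInstance

/-- Add an independent centered Gaussian noise of variance `c` to the output `U₂`. -/
def addNoise (d : SLDecomp Q N T) (c : ℝ≥0) : SLDecomp Q N T where
  μT := d.μT
  probT := inferInstance
  κ1 := d.κ1
  markov1 := inferInstance
  κ2 := (d.κ2 ×ₖ Kernel.const _ (gaussianReal 0 c)).map fun w : ℝ × ℝ => w.1 + w.2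
  markov2 := Kernel.IsMarkovKernel.map _ (by fun_prop)

theorem estimationCost_addNoise (d : SLDecomp Q N T) (c : ℝ≥0) (t : T) :
    (d.addNoise c).estimationCost t = d.estimationCost t + c := by
  have key (a y : ℝ) : ∫⁻ w, ENNReal.ofReal ((a - w) ^ 2) ∂(d.addNoise c).κ2 (t, y)
      = ∫⁻ w, ENNReal.ofReal ((a - w) ^ 2) ∂d.κ2 (t, y) + c := by
    change ∫⁻ w, _ ∂((d.κ2 ×ₖ Kernel.const _ (gaussianReal 0 c)).map
      fun w : ℝ × ℝ => w.1 + w.2) (t, y) = _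
    rw [Kernel.lintegral_map _ (by fun_prop) _ (by fun_prop), Kernel.prod_apply,
      lintegral_prod _ (by fun_prop)]
    simp only [Kernel.const_apply, ← sub_sub, lintegral_sq_sub_gaussianReal]
    rw [lintegral_add_right _ measurable_const]
    simp
  unfold estimationCost
  simp only [key, lintegral_add_right _ measurable_const, lintegral_const, measure_univ, mul_one]
  rfl

end SLDecomp

/-- **Cardinality bound for the time-sharing variable** (Theorem 1): if `(P, S)` is realized
by a decomposed joint distribution of `(X₀, T, U₁, X₁, Y₁, U₂)` whose time-sharing variable
`T` takes values in an arbitrary finite set, then `(P, S)` is also realized by a decomposed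
joint distribution whose time-sharing variable takes values in a set of cardinality at
most `2`. -/
theorem timeSharing_cardinality_bound (Q N : ℝ≥0) (hQ : 0 < Q) (hN : 0 < N)
    (T : Type) [MeasurableSpace T] [Fintype T] (d : SLDecomp Q N T)
    (P S : ℝ) (h : d.realizes P S) :
    ∃ (T' : Type) (mT' : MeasurableSpace T') (fT' : Fintype T'),
      Fintype.card T' ≤ 2 ∧ ∃ d' : SLDecomp Q N T', d'.realizes P S := by
  obtain ⟨⟨hP, eP⟩, hS, eS⟩ := (d.realizes_iff P S).1 h
  have nP : ∫⁻ t, d.powerCost t ∂d.μT ≠ ∞ := by simp [eP]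
  have nS : ∫⁻ t, d.estimationCost t ∂d.μT ≠ ∞ := by simp [eS]
  have fP := ae_lt_top d.measurable_powerCost nP
  have fS := ae_lt_top d.measurable_estimationCost nS
  have iP := integral_toReal d.measurable_powerCost.aemeasurable fP
  have iS := integral_toReal d.measurable_estimationCost.aemeasurable fS
  rw [eP, ENNReal.toReal_ofReal hP] at iP
  rw [eS, ENNReal.toReal_ofReal hS] at iS
  obtain ⟨i, ⟨hiP, hiS⟩, j, ⟨hjP, hjS⟩, l, hl0, hl1, hlP, hlS⟩ := exists_pair_average_le
    (integrable_toReal_of_lintegral_ne_top d.measurable_powerCost.aemeasurable nP)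
    (integrable_toReal_of_lintegral_ne_top d.measurable_estimationCost.aemeasurable nS)
    (G := {t | d.powerCost t < ∞ ∧ d.estimationCost t < ∞}) (fP.and fS)
  rw [iP] at hlP
  rw [iS] at hlS
  have hl1' : 0 ≤ 1 - l := sub_nonneg.2 hl1
  have combine {a b : ℝ≥0∞} (ha : a < ∞) (hb : b < ∞) :
      ENNReal.ofReal l * a + ENNReal.ofReal (1 - l) * b
        = ENNReal.ofReal (l * a.toReal + (1 - l) * b.toReal) := by
    rw [ENNReal.ofReal_add (by positivity) (by positivity), ENNReal.ofReal_mul hl0,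
      ENNReal.ofReal_mul hl1', ENNReal.ofReal_toReal ha.ne, ENNReal.ofReal_toReal hb.ne]
  let ν : Measure Bool := ENNReal.ofReal l • Measure.dirac true +
    ENNReal.ofReal (1 - l) • Measure.dirac false
  have hν : IsProbabilityMeasure ν := ⟨by simp [ν, ← ENNReal.ofReal_add hl0 hl1']⟩
  let f : Bool → T := fun b => if b then i else j
  let gap : ℝ := S - (l * (d.estimationCost i).toReal + (1 - l) * (d.estimationCost j).toReal)
  have hgap : 0 ≤ gap := sub_nonneg.2 hlS
  let d' := d.reindex f (measurable_of_finite f) ν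
  refine ⟨Bool, inferInstance, inferInstance, by simp, d'.addNoise gap.toNNReal,
    (SLDecomp.realizes_iff _ P S).2 ⟨⟨hP, ?_⟩, hS, ?_⟩⟩
  · change ∫⁻ b, d.powerCost (f b) ∂ν = _
    simp only [ν, lintegral_add_measure, lintegral_smul_measure, lintegral_dirac, smul_eq_mul]
    simp only [f, if_true, Bool.false_eq_true, if_false]
    rw [combine hiP hjP, hlP]
  · simp only [SLDecomp.estimationCost_addNoise]
    rw [lintegral_add_right _ measurable_const]
    change ∫⁻ b, d.estimationCost (f b) ∂ν + ∫⁻ _, _ ∂ν = _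
    simp only [lintegral_const, measure_univ, mul_one]
    simp only [ν, lintegral_add_measure, lintegral_smul_measure, lintegral_dirac, smul_eq_mul]
    simp only [f, if_true, Bool.false_eq_true, if_false]
    rw [combine hiS hjS, ← ENNReal.ofReal, ← ENNReal.ofReal_add (by positivity) hgap]
    congr 1
    ring

end

end Witsenhausen
end
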